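/- arXiv:2410.01600 — 2 statements merged into one kernel-verified Lean document; each statement's English description precedes it below -/
import Mathlib

section
/- Let n ≥ 1 be a natural number, and let a, b be integers with 0 ≤ a, a < 2b, and b ≤ n. Let ε and M be real numbers with 0 < ε < 1 and M ≥ 2n/ε. Then max 0 ((a : ℝ) − M · max 0 ((a : ℝ) − (b : ℝ) + ε)) + max 0 ((a : ℝ) − (b : ℝ)) equals (a : ℝ) if a < b, and equals (a : ℝ) − (b : ℝ) if a ≥ b. -/
/-- The bounded modular-reduction function `g(a,b)` (equal to `a` if `a < b`, and
`a - b` if `a ≥ b`) can be written using linear operations and ReLU: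
`g(a,b) = ReLU(a - M * ReLU(a - b + ε)) + ReLU(a - b)`. -/
theorem relu_implements_bounded_mod (n : ℕ) (hn : 1 ≤ n) (a b : ℤ)
    (ha : 0 ≤ a) (hab : a < 2 * b) (hbn : b ≤ (n : ℤ))
    (ε M : ℝ) (hε0 : 0 < ε) (hε1 : ε < 1) (hM : M ≥ 2 * n / ε) :
    (a < b →
      max 0 ((a : ℝ) - M * max 0 ((a : ℝ) - (b : ℝ) + ε)) + max 0 ((a : ℝ) - (b : ℝ))
        = (a : ℝ)) ∧
    (b ≤ a →
      max 0 ((a : ℝ) - M * max 0 ((a : ℝ) - (b : ℝ) + ε)) + max 0 ((a : ℝ) - (b : ℝ))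
        = (a : ℝ) - (b : ℝ)) := by
  have ha' : (0 : ℝ) ≤ a := by exact_mod_cast ha
  have hab' : (a : ℝ) < 2 * b := by exact_mod_cast hab
  have hbn' : (b : ℝ) ≤ n := by exact_mod_cast hbn
  have hMε : 2 * (n : ℝ) ≤ M * ε := (div_le_iff₀ hε0).mp hM
  have hM0 : 0 ≤ M := le_trans (by positivity) hM
  constructor
  · intro h
    have h' : (a : ℝ) + 1 ≤ b := by exact_mod_cast h
    rw [max_eq_left (by linarith : (a : ℝ) - b + ε ≤ 0),
      max_eq_left (by linarith : (a : ℝ) - b ≤ 0), mul_zero, sub_zero, add_zero,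
      max_eq_right ha']
  · intro h
    have h' : (b : ℝ) ≤ a := by exact_mod_cast h
    have h2 : 0 ≤ M * ((a : ℝ) - b) := mul_nonneg hM0 (by linarith)
    rw [max_eq_right (by linarith : 0 ≤ (a : ℝ) - b + ε),
      max_eq_right (by linarith : 0 ≤ (a : ℝ) - b),
      max_eq_left (by rw [mul_add]; linarith), zero_add]
end

section
/- Fix D and n, let A : (Fin n → EuclideanSpace ℝ (Fin D)) → (Fin n → EuclideanSpace ℝ (Fin D)) be any map satisfying A(x ∘ σ) = A(x) ∘ σ for every permutation σ of Fin n, and let p : Fin n → EuclideanSpace ℝ (Fin D) be positional embeddings with p i₀ = p i₁ for two distinct indices i₀, i₁. Define E(x) = A(fun i => x i + p i). Then for every sequence x and every index j with j ≠ i₀ and j ≠ i₁, one has E(x ∘ Equiv.swap i₀ i₁) j = E(x) j. -/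
/-- If `A` is permutation-equivariant and the positional embeddings at two distinct
positions `i₀, i₁` coincide, then the encoder `E(x) = A(fun i => x i + p i)` gives
the same output at any other position `j` when the tokens at `i₀` and `i₁` are
swapped. -/
theorem encoder_equal_posEmb_swap_invariant (D n : ℕ)
    (A : (Fin n → EuclideanSpace ℝ (Fin D)) → (Fin n → EuclideanSpace ℝ (Fin D)))
    (hA : ∀ (σ : Equiv.Perm (Fin n)) (x : Fin n → EuclideanSpace ℝ (Fin D)),
      A (x ∘ σ) = A x ∘ σ)
    (p : Fin n → EuclideanSpace ℝ (Fin D))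
    (i₀ i₁ : Fin n) (hne : i₀ ≠ i₁) (hp : p i₀ = p i₁)
    (x : Fin n → EuclideanSpace ℝ (Fin D)) (j : Fin n) (hj₀ : j ≠ i₀) (hj₁ : j ≠ i₁) :
    A (fun i => (x ∘ Equiv.swap i₀ i₁) i + p i) j = A (fun i => x i + p i) j := by
  have hpi : ∀ i, p (Equiv.swap i₀ i₁ i) = p i := by
    intro i
    rw [Equiv.swap_apply_def]
    split_ifs with h0 h1
    · rw [h0, hp]
    · rw [h1, hp]
    · rfl
  have h : (fun i => (x ∘ Equiv.swap i₀ i₁) i + p i)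
      = (fun i => x i + p i) ∘ Equiv.swap i₀ i₁ := by
    funext i
    simp only [Function.comp_apply, hpi]
  rw [h, hA, Function.comp_apply, Equiv.swap_apply_of_ne_of_ne hj₀ hj₁]
end
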